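/- Let h_{R1}, h_{R2}, h_{R4} ∈ EuclideanSpace ℂ (Fin 3) be linearly independent, and let h_{21}, h_{12}, h_{34}, h_{32}, h_{14} ∈ ℂ be arbitrary direct channel gains. Then there exist beamforming vectors u_{12}, u_{21}, u_{34} ∈ ℂ³ such that: ⟪h_{R1}, u_{34}⟫ = 0 and h_{32} + ⟪h_{R2}, u_{34}⟫ = 0 and h_{34} + ⟪h_{R4}, u_{34}⟫ ≠ 0; ⟪h_{R4}, u_{21}⟫ = 0 and h_{21} + ⟪h_{R1}, u_{21}⟫ ≠ 0; and h_{14} + ⟪h_{R4}, u_{12}⟫ = 0 and h_{12} + ⟪h_{R2}, u_{12}⟫ ≠ 0. -/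

import Mathlib

/-!
The map `u ↦ (⟪hR1, u⟫, ⟪hR2, u⟫, ⟪hR4, u⟫)` is onto `ℂ³` because the three vectors are a basis:
any prescribed values define a linear functional on that basis, which is represented by a vector
(`exists_inner_eq`). Each beamforming vector is therefore obtained by prescribing its three inner
products. To make a desired coefficient `h + ⟪v, u⟫` nonzero, the prescribed value of `⟪v, u⟫` is
`1 - h`, so that the coefficient equals `1`.
-/

open scoped ComplexInnerProductSpace

/-- Against a linearly independent family indexed by the dimension of the space, the inner products
of a vector can be prescribed freely. -/
theorem exists_inner_eq {n : ℕ} {v : Fin n → EuclideanSpace ℂ (Fin n)}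
    (hv : LinearIndependent ℂ v) (c : Fin n → ℂ) :
    ∃ u : EuclideanSpace ℂ (Fin n), ∀ i, ⟪v i, u⟫ = c i := by
  let b := basisOfLinearIndependentOfCardEqFinrank' v hv (by simp)
  -- The functional takes conjugated values since its representing vector `u` enters as `⟪u, v i⟫`.
  let f : EuclideanSpace ℂ (Fin n) →ₗ[ℂ] ℂ := b.constr ℂ fun i => star (c i)
  have hf : ∀ i, f (v i) = star (c i) := fun i => by
    have hb : b i = v i := by simp [b]
    rw [← hb]
    exact b.constr_basis ℂ _ i
  refine ⟨(InnerProductSpace.toDual ℂ _).symm f.toContinuousLinearMap, fun i => ?_⟩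
  rw [← inner_conj_symm, InnerProductSpace.toDual_symm_apply]
  simp [hf]

/-- Beamforming existence step in the proof that 3 degrees of freedom are achievable
for the full-duplex two-way interference channel with an instantaneous 3-antenna
relay: given linearly independent relay channel vectors `h_{R1}, h_{R2}, h_{R4}`,
there exist beamforming vectors `u₁₂, u₂₁, u₃₄` with the stated nullification,
neutralization, and nonzero desired-coefficient properties. -/
theorem stmt4 (hR1 hR2 hR4 : EuclideanSpace ℂ (Fin 3))
    (hli : LinearIndependent ℂ ![hR1, hR2, hR4])
    (h21 h12 h34 h32 h14 : ℂ) :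
    ∃ u12 u21 u34 : EuclideanSpace ℂ (Fin 3),
      ⟪hR1, u34⟫ = 0 ∧ h32 + ⟪hR2, u34⟫ = 0 ∧ h34 + ⟪hR4, u34⟫ ≠ 0 ∧
      ⟪hR4, u21⟫ = 0 ∧ h21 + ⟪hR1, u21⟫ ≠ 0 ∧
      h14 + ⟪hR4, u12⟫ = 0 ∧ h12 + ⟪hR2, u12⟫ ≠ 0 := by
  obtain ⟨u12, a⟩ := exists_inner_eq hli ![0, 1 - h12, -h14]
  obtain ⟨u21, b⟩ := exists_inner_eq hli ![1 - h21, 0, 0]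
  obtain ⟨u34, c⟩ := exists_inner_eq hli ![0, -h32, 1 - h34]
  simp only [Fin.forall_fin_succ] at a b c
  simp at a b c
  exact ⟨u12, u21, u34, by simp [a, b, c]⟩
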